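/- arXiv:1804.01614 — 2 statements merged into one kernel-verified Lean document; each statement's English description precedes it below -/
import Mathlib

section
/- Let B = (b_0, …, b_{m−1}) and T = (t_0, …, t_{m−1}) be two sequences of m real numbers (m ≥ 1) placed in a ring, and n a real number. If b_0 + … + b_{m−1} ≤ n and t_0 + … + t_{m−1} = n, then for every l with 1 ≤ l ≤ m there exists an index i ∈ {0, …, m−1} such that for every l' with 1 ≤ l' ≤ l, the prefix chain sum satisfies Σ_{j=0}^{l'−1} b_{(i+j) mod m} ≤ Σ_{j=0}^{l'−1} t_{(i+j) mod m}. -/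
/-! Start the chain at an index where the partial sums of `b - t` are largest. One full turn does
not increase these partial sums, so a maximum over the first turn is a maximum over all turns, and
every chain starting there has nonpositive excess. -/

theorem exists_lt_forall_le_of_add_period_le {α : Type*} [LinearOrder α] {g : ℕ → α} {m : ℕ}
    (hm : 0 < m) (hg : ∀ k, g (k + m) ≤ g k) : ∃ i < m, ∀ k, g k ≤ g i := by
  obtain ⟨i, hi, hmax⟩ := (Finset.range m).exists_max_image g (Finset.nonempty_range_iff.2 hm.ne')
  refine ⟨i, Finset.mem_range.1 hi, fun k => ?_⟩
  induction k using Nat.strong_induction_on with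
  | h k ih =>
    obtain hk | hk := lt_or_ge k m
    · exact hmax k (Finset.mem_range.2 hk)
    · obtain ⟨r, rfl⟩ := Nat.exists_eq_add_of_le' hk
      exact (hg r).trans (ih r (Nat.lt_add_of_pos_right hm))

theorem sum_range_add_period {M : Type*} [AddCommMonoid M] {f : ℕ → M} {m : ℕ}
    (hf : Function.Periodic f m) (k : ℕ) :
    ∑ j ∈ Finset.range (k + m), f j = ∑ j ∈ Finset.range k, f j + ∑ j ∈ Finset.range m, f j := by
  rw [add_comm k, Finset.sum_range_add, add_comm]
  simp only [add_comm m, hf _]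

theorem sum_range_mod {M : Type*} [AddCommMonoid M] (f : ℕ → M) (m : ℕ) :
    ∑ j ∈ Finset.range m, f (j % m) = ∑ j ∈ Finset.range m, f j :=
  Finset.sum_congr rfl fun _ hj => by rw [Nat.mod_eq_of_lt (Finset.mem_range.1 hj)]

section OrderedGroup

variable {G : Type*} [AddCommGroup G] [LinearOrder G] [IsOrderedAddMonoid G] {m : ℕ}

theorem exists_lt_forall_sum_range_nonpos_of_periodic {f : ℕ → G} (hm : 0 < m)
    (hf : Function.Periodic f m) (hsum : ∑ j ∈ Finset.range m, f j ≤ 0) :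
    ∃ i < m, ∀ l, ∑ j ∈ Finset.range l, f (i + j) ≤ 0 := by
  have hturn (k : ℕ) : ∑ j ∈ Finset.range (k + m), f j ≤ ∑ j ∈ Finset.range k, f j := by
    rw [sum_range_add_period hf]
    exact add_le_of_nonpos_right hsum
  obtain ⟨i, hi, hmax⟩ := exists_lt_forall_le_of_add_period_le
    (g := fun k => ∑ j ∈ Finset.range k, f j) hm hturn
  refine ⟨i, hi, fun l => ?_⟩
  have hle := hmax (i + l)
  rwa [Finset.sum_range_add, add_le_iff_nonpos_right] at hle

theorem pigeonring_variable_threshold_general (hm : 0 < m) {b t : ℕ → G}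
    (hbt : ∑ i ∈ Finset.range m, b i ≤ ∑ i ∈ Finset.range m, t i) :
    ∃ i < m, ∀ l,
      ∑ j ∈ Finset.range l, b ((i + j) % m) ≤ ∑ j ∈ Finset.range l, t ((i + j) % m) := by
  have hper : Function.Periodic (fun j => b (j % m) - t (j % m)) m :=
    (Nat.periodic_mod m).comp fun r => b r - t r
  have hsum : ∑ j ∈ Finset.range m, (b (j % m) - t (j % m)) ≤ 0 := by
    rwa [Finset.sum_sub_distrib, sum_range_mod, sum_range_mod, sub_nonpos]
  obtain ⟨i, hi, hle⟩ := exists_lt_forall_sum_range_nonpos_of_periodic hm hper hsum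
  refine ⟨i, hi, fun l => ?_⟩
  simpa only [Finset.sum_sub_distrib, sub_nonpos] using hle l

end OrderedGroup

/-- Pigeonring principle with variable threshold allocation: if `∑ B ≤ n` and `∑ T = n`, then
for every `l ∈ [1, m]` there is a chain of length `l` all of whose prefixes satisfy the
variable-threshold bound. -/
theorem pigeonring_variable_threshold (m : ℕ) (hm : 1 ≤ m) (b t : ℕ → ℝ) (n : ℝ)
    (hb : ∑ i ∈ Finset.range m, b i ≤ n)
    (ht : ∑ i ∈ Finset.range m, t i = n) :
    ∀ l, 1 ≤ l → l ≤ m →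
      ∃ i < m, ∀ l', 1 ≤ l' → l' ≤ l →
        ∑ j ∈ Finset.range l', b ((i + j) % m) ≤ ∑ j ∈ Finset.range l', t ((i + j) % m) := by
  obtain ⟨i, hi, hle⟩ := pigeonring_variable_threshold_general hm (hb.trans_eq ht.symm)
  exact fun l _ _ => ⟨i, hi, fun l' _ _ => hle l'⟩
end

section
/- Let m ≥ 1, let u_0 ≤ v_0, …, u_{m−1} ≤ v_{m−1} be real numbers with Σ_{i=0}^{m−1} u_i ≤ n ≤ Σ_{i=0}^{m−1} v_i for a real number n, and let T = (t_0, …, t_{m−1}) be real numbers with t_0 + … + t_{m−1} < n. Then there exists a sequence B = (b_0, …, b_{m−1}) with u_i ≤ b_i ≤ v_i for every i and b_0 + … + b_{m−1} ≤ n, such that for every index i ∈ {0, …, m−1} there exists l' with 1 ≤ l' ≤ m for which Σ_{j=0}^{l'−1} b_{(i+j) mod m} > Σ_{j=0}^{l'−1} t_{(i+j) mod m}. In particular, no threshold sequence T with Σ T < n can guarantee, for all B in the given box ranges with Σ B ≤ n, the existence at every chain length l ∈ {1, …, m} of a chain all of whose prefixes satisfy the variable-threshold bound. -/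
/-! A chain of length `m` goes once around the ring, so its sum does not depend on where it starts.
The possible totals of the boxes fill the whole interval `[∑ u, ∑ v]`, because closed intervals in a
linear order add endpoint by endpoint. Hence some admissible `B` has `∑ B = n > ∑ T`, and then every
full-length chain violates its threshold. -/

theorem sum_range_add_mod {M : Type*} [AddCommMonoid M] (f : ℕ → M) (m i : ℕ) :
    ∑ j ∈ Finset.range m, f ((i + j) % m) = ∑ j ∈ Finset.range m, f j := by
  calc ∑ j ∈ Finset.range m, f ((i + j) % m)
      = ∑ k ∈ Finset.Ico i (i + m), f (k % m) := by
        rw [Finset.sum_Ico_eq_sum_range, Nat.add_sub_cancel_left]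
    _ = ∑ j ∈ (Finset.Ico i (i + m)).image (· % m), f j :=
        (Finset.sum_image (Nat.mod_injOn_Ico i m)).symm
    _ = ∑ j ∈ Finset.range m, f j := by rw [Nat.image_Ico_mod]

section LinearOrder

variable {M : Type*} [AddCommMonoid M] [LinearOrder M] [IsOrderedAddMonoid M]
  [AddLeftReflectLE M] [ExistsAddOfLE M]

open scoped Pointwise in
theorem finsetSum_Icc {ι : Type*} {s : Finset ι} {u v : ι → M} (huv : ∀ i ∈ s, u i ≤ v i) :
    ∑ i ∈ s, Set.Icc (u i) (v i) = Set.Icc (∑ i ∈ s, u i) (∑ i ∈ s, v i) := by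
  classical
  induction s using Finset.induction_on with
  | empty => simp only [Finset.sum_empty, Set.Icc_self, Set.singleton_zero]
  | insert a s ha ih =>
    obtain ⟨huv_a, huv_s⟩ := (Finset.forall_mem_insert ..).mp huv
    rw [Finset.sum_insert ha, Finset.sum_insert ha, Finset.sum_insert ha, ih huv_s,
      Set.Icc_add_Icc huv_a (Finset.sum_le_sum huv_s)]

theorem exists_mem_Icc_sum_eq {ι : Type*} {s : Finset ι} {u v : ι → M} {n : M}
    (huv : ∀ i ∈ s, u i ≤ v i) (hn : n ∈ Set.Icc (∑ i ∈ s, u i) (∑ i ∈ s, v i)) :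
    ∃ b : ι → M, (∀ i ∈ s, b i ∈ Set.Icc (u i) (v i)) ∧ ∑ i ∈ s, b i = n := by
  rw [← finsetSum_Icc huv, Set.mem_finsetSum] at hn
  obtain ⟨b, hb, hsum⟩ := hn
  exact ⟨b, fun _ hi => hb hi, hsum⟩

theorem pigeonring_variable_threshold_tight_general (m : ℕ) (u v t : ℕ → M) (n : M)
    (huv : ∀ i < m, u i ≤ v i)
    (hu : ∑ i ∈ Finset.range m, u i ≤ n)
    (hv : n ≤ ∑ i ∈ Finset.range m, v i)
    (ht : ∑ i ∈ Finset.range m, t i < n) :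
    ∃ b : ℕ → M, (∀ i < m, u i ≤ b i ∧ b i ≤ v i) ∧
      (∑ i ∈ Finset.range m, b i = n) ∧
      ∀ i < m, ∃ l', 1 ≤ l' ∧ l' ≤ m ∧
        ∑ j ∈ Finset.range l', t ((i + j) % m) < ∑ j ∈ Finset.range l', b ((i + j) % m) := by
  obtain ⟨b, hb, hsum⟩ :=
    exists_mem_Icc_sum_eq (fun i hi => huv i (Finset.mem_range.mp hi)) ⟨hu, hv⟩
  refine ⟨b, fun i hi => hb i (Finset.mem_range.mpr hi), hsum, fun i hi => ?_⟩
  refine ⟨m, Nat.one_le_of_lt hi, le_rfl, ?_⟩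
  rwa [sum_range_add_mod, sum_range_add_mod, hsum]

end LinearOrder

/-- Tightness of the variable-threshold pigeonring principle: if the boxes range over real
intervals `[u i, v i]` with `∑ u ≤ n ≤ ∑ v`, then for any threshold sequence `T` with
`∑ T < n` there is an admissible box sequence `B` with `∑ B ≤ n` such that no chain starting
anywhere has all prefixes within the variable-threshold bound. -/
theorem pigeonring_variable_threshold_tight (m : ℕ) (hm : 1 ≤ m) (u v t : ℕ → ℝ) (n : ℝ)
    (huv : ∀ i < m, u i ≤ v i)
    (hu : ∑ i ∈ Finset.range m, u i ≤ n)
    (hv : n ≤ ∑ i ∈ Finset.range m, v i)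
    (ht : ∑ i ∈ Finset.range m, t i < n) :
    ∃ b : ℕ → ℝ, (∀ i < m, u i ≤ b i ∧ b i ≤ v i) ∧
      (∑ i ∈ Finset.range m, b i ≤ n) ∧
      ∀ i < m, ∃ l', 1 ≤ l' ∧ l' ≤ m ∧
        ∑ j ∈ Finset.range l', t ((i + j) % m) < ∑ j ∈ Finset.range l', b ((i + j) % m) := by
  obtain ⟨b, hb, hsum, hchain⟩ := pigeonring_variable_threshold_tight_general m u v t n huv hu hv ht
  exact ⟨b, hb, hsum.le, hchain⟩
end
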